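/- arXiv:2208.06218 — 3 statements merged into one kernel-verified Lean document; each statement's English description precedes it below -/
import Mathlib

section
/- Let X be a real n×p matrix (n ≥ p) whose Gram matrix XᵀX is invertible and symmetric, let u = x_{i_m} ∈ ℝᵖ be the i_m-th row of X (viewed as a column vector), let x_j ∈ ℝᵖ, and let X̃ be the matrix obtained from X by replacing the row x_{i_m}ᵀ with x_jᵀ. Define A = (uᵀ(XᵀX)⁻¹x_j)·(x_j uᵀ + u x_jᵀ) + (1 − uᵀ(XᵀX)⁻¹u)·x_j x_jᵀ − (1 + x_jᵀ(XᵀX)⁻¹x_j)·u uᵀ and d = (1 − uᵀ(XᵀX)⁻¹u)(1 + x_jᵀ(XᵀX)⁻¹x_j) + (uᵀ(XᵀX)⁻¹x_j)². If d ≠ 0, then X̃ᵀX̃ is invertible and (X̃ᵀX̃)⁻¹ = (XᵀX)⁻¹ − (XᵀX)⁻¹ (A/d) (XᵀX)⁻¹; consequently the leverage of x_j in the exchanged sample is h_{i_m i_m}(x_j) = x_jᵀ[(XᵀX)⁻¹ − (XᵀX)⁻¹ (A/d) (XᵀX)⁻¹] x_j. -/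
open Matrix

/-! Exchanging the row `u` for `v` changes the Gram matrix by `v vᵀ - u uᵀ = U V`, where `U` has
columns `-u`, `v` and `V` has rows `u`, `v`. By the matrix determinant lemma and the Woodbury
identity, inverting `G + U V` comes down to inverting the `2 × 2` matrix `1 + V G⁻¹ U`. Its
determinant is `d`, and `U adj(1 + V G⁻¹ U) V` is `A`. -/

section Perturbation

variable {ι κ R : Type*} [Fintype ι] [DecidableEq ι] [Fintype κ] [DecidableEq κ] [CommRing R]
  {G : Matrix ι ι R} {U : Matrix ι κ R} {V : Matrix κ ι R}

/-- The capacitance matrix of the perturbation `G + U V` of `G`: the matrix whose inverse occurs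
in the Woodbury identity for `(G + U V)⁻¹`. -/
noncomputable def capacitance (G : Matrix ι ι R) (U : Matrix ι κ R) (V : Matrix κ ι R) :
    Matrix κ κ R :=
  1 + V * G⁻¹ * U

theorem isUnit_add_mul_of_isUnit_capacitance (hG : IsUnit G) (hC : IsUnit (capacitance G U V)) :
    IsUnit (G + U * V) := by
  rw [isUnit_iff_isUnit_det] at hG hC ⊢
  rw [det_add_mul U V hG]
  exact hG.mul hC

theorem inv_add_mul_eq_sub_capacitance (hG : IsUnit G) (hC : IsUnit (capacitance G U V)) :
    (G + U * V)⁻¹ = G⁻¹ - G⁻¹ * (U * (capacitance G U V)⁻¹ * V) * G⁻¹ := by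
  have woodbury := add_mul_mul_inv_eq_sub G U 1 V hG isUnit_one (by simpa [capacitance] using hC)
  simpa only [capacitance, inv_one, Matrix.mul_one, Matrix.mul_assoc] using woodbury

end Perturbation

section Pair

variable {ι κ R : Type*}

theorem transpose_of_pair_mul_mul_of_pair [CommSemiring R] (u₁ u₂ : ι → R)
    (M : Matrix (Fin 2) (Fin 2) R) (v₁ v₂ : κ → R) :
    (of ![u₁, u₂])ᵀ * M * of ![v₁, v₂] =
      M 0 0 • vecMulVec u₁ v₁ + M 0 1 • vecMulVec u₁ v₂ +
        (M 1 0 • vecMulVec u₂ v₁ + M 1 1 • vecMulVec u₂ v₂) := by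
  ext i j
  simp only [mul_apply, Fin.sum_univ_two, transpose_apply, of_apply, cons_val_zero, cons_val_one,
    Matrix.add_apply, Matrix.smul_apply, vecMulVec_apply, smul_eq_mul]
  ring

theorem of_pair_mul_mul_transpose_of_pair [Fintype ι] [Fintype κ] [NonUnitalSemiring R]
    (v₁ v₂ : κ → R) (H : Matrix κ ι R) (u₁ u₂ : ι → R) :
    of ![v₁, v₂] * H * (of ![u₁, u₂])ᵀ =
      !![v₁ ⬝ᵥ (H *ᵥ u₁), v₁ ⬝ᵥ (H *ᵥ u₂); v₂ ⬝ᵥ (H *ᵥ u₁), v₂ ⬝ᵥ (H *ᵥ u₂)] := by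
  rw [Matrix.mul_assoc]
  ext i j
  fin_cases i <;> fin_cases j <;> rfl

end Pair

section Exchange

variable {ι R : Type*} [CommRing R]

theorem sub_vecMulVec_add_vecMulVec_eq_add_mul (G : Matrix ι ι R) (u v : ι → R) :
    G - vecMulVec u u + vecMulVec v v = G + (of ![-u, v])ᵀ * of ![u, v] := by
  rw [← Matrix.mul_one (of ![-u, v])ᵀ, transpose_of_pair_mul_mul_of_pair]
  simp [neg_vecMulVec, sub_eq_add_neg, add_assoc]

variable [Fintype ι]

/-- The denominator `d` of the exchange formula, as a function of the inverse `H` of the Gram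
matrix, the removed row `u` and the inserted row `v`. -/
def exchangeDenom (H : Matrix ι ι R) (u v : ι → R) : R :=
  (1 - u ⬝ᵥ (H *ᵥ u)) * (1 + v ⬝ᵥ (H *ᵥ v)) + (u ⬝ᵥ (H *ᵥ v)) ^ 2

/-- The matrix `A` of the exchange formula, as a function of the inverse `H` of the Gram matrix,
the removed row `u` and the inserted row `v`. -/
def exchangeMatrix (H : Matrix ι ι R) (u v : ι → R) : Matrix ι ι R :=
  (u ⬝ᵥ (H *ᵥ v)) • (vecMulVec v u + vecMulVec u v) + (1 - u ⬝ᵥ (H *ᵥ u)) • vecMulVec v v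
    - (1 + v ⬝ᵥ (H *ᵥ v)) • vecMulVec u u

variable [DecidableEq ι] {G : Matrix ι ι R}

theorem capacitance_exchange (hG : G.IsSymm) (u v : ι → R) :
    capacitance G (of ![-u, v])ᵀ (of ![u, v]) =
      !![1 - u ⬝ᵥ (G⁻¹ *ᵥ u), u ⬝ᵥ (G⁻¹ *ᵥ v);
        -(u ⬝ᵥ (G⁻¹ *ᵥ v)), 1 + v ⬝ᵥ (G⁻¹ *ᵥ v)] := by
  have hcomm : v ⬝ᵥ (G⁻¹ *ᵥ u) = u ⬝ᵥ (G⁻¹ *ᵥ v) := by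
    rw [dotProduct_mulVec, ← mulVec_transpose, hG.inv.eq, dotProduct_comm]
  rw [capacitance, of_pair_mul_mul_transpose_of_pair, one_fin_two]
  simp [mulVec_neg, hcomm, sub_eq_add_neg]

theorem det_capacitance_exchange (hG : G.IsSymm) (u v : ι → R) :
    (capacitance G (of ![-u, v])ᵀ (of ![u, v])).det = exchangeDenom G⁻¹ u v := by
  rw [capacitance_exchange hG, det_fin_two_of, exchangeDenom]
  ring

theorem mul_adjugate_capacitance_exchange_mul (hG : G.IsSymm) (u v : ι → R) :
    (of ![-u, v])ᵀ * (capacitance G (of ![-u, v])ᵀ (of ![u, v])).adjugate * of ![u, v] =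
      exchangeMatrix G⁻¹ u v := by
  rw [capacitance_exchange hG, adjugate_fin_two_of, transpose_of_pair_mul_mul_of_pair,
    exchangeMatrix]
  simp only [of_apply, cons_val_zero, cons_val_one, neg_vecMulVec]
  module

theorem isUnit_capacitance_exchange (hG : G.IsSymm) {u v : ι → R}
    (hd : IsUnit (exchangeDenom G⁻¹ u v)) :
    IsUnit (capacitance G (of ![-u, v])ᵀ (of ![u, v])) := by
  rwa [isUnit_iff_isUnit_det, det_capacitance_exchange hG]

theorem isUnit_sub_vecMulVec_add_vecMulVec (hG : G.IsSymm) (hGu : IsUnit G) {u v : ι → R}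
    (hd : IsUnit (exchangeDenom G⁻¹ u v)) :
    IsUnit (G - vecMulVec u u + vecMulVec v v) := by
  rw [sub_vecMulVec_add_vecMulVec_eq_add_mul]
  exact isUnit_add_mul_of_isUnit_capacitance hGu (isUnit_capacitance_exchange hG hd)

theorem inv_sub_vecMulVec_add_vecMulVec (hG : G.IsSymm) (hGu : IsUnit G) {u v : ι → R}
    (hd : IsUnit (exchangeDenom G⁻¹ u v)) :
    (G - vecMulVec u u + vecMulVec v v)⁻¹ =
      G⁻¹ - G⁻¹ * (Ring.inverse (exchangeDenom G⁻¹ u v) • exchangeMatrix G⁻¹ u v) * G⁻¹ := by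
  rw [sub_vecMulVec_add_vecMulVec_eq_add_mul,
    inv_add_mul_eq_sub_capacitance hGu (isUnit_capacitance_exchange hG hd),
    Matrix.inv_def (capacitance G _ _), Matrix.mul_smul, Matrix.smul_mul,
    det_capacitance_exchange hG, mul_adjugate_capacitance_exchange_mul hG]

end Exchange

section Gram

variable {m n R : Type*} [Fintype m]

theorem transpose_mul_self_eq_sum_vecMulVec [NonUnitalNonAssocSemiring R] (X : Matrix m n R) :
    Xᵀ * X = ∑ k, vecMulVec (X k) (X k) := by
  ext i j
  simp only [mul_apply, transpose_apply, Matrix.sum_apply, vecMulVec_apply]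

theorem transpose_mul_self_updateRow [DecidableEq m] [NonUnitalNonAssocRing R] (X : Matrix m n R)
    (i : m) (v : n → R) :
    (X.updateRow i v)ᵀ * X.updateRow i v =
      Xᵀ * X - vecMulVec (X i) (X i) + vecMulVec v v := by
  have hrest : ∀ k ∈ ({i}ᶜ : Finset m),
      vecMulVec (X.updateRow i v k) (X.updateRow i v k) = vecMulVec (X k) (X k) := by
    intro k hk
    rw [updateRow_ne (by simpa using hk)]
  simp only [transpose_mul_self_eq_sum_vecMulVec, Fintype.sum_eq_add_sum_compl i]
  rw [Finset.sum_congr rfl hrest, updateRow_self, add_sub_cancel_left, add_comm]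

theorem inv_gram_exchange_general [DecidableEq m] [Fintype n] [DecidableEq n] [CommRing R]
    (X : Matrix m n R) (i : m) (v : n → R) (hX : IsUnit (Xᵀ * X))
    (hd : IsUnit (exchangeDenom (Xᵀ * X)⁻¹ (X i) v)) :
    IsUnit ((X.updateRow i v)ᵀ * X.updateRow i v) ∧
      ((X.updateRow i v)ᵀ * X.updateRow i v)⁻¹ =
        (Xᵀ * X)⁻¹ - (Xᵀ * X)⁻¹ *
          (Ring.inverse (exchangeDenom (Xᵀ * X)⁻¹ (X i) v) • exchangeMatrix (Xᵀ * X)⁻¹ (X i) v) *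
            (Xᵀ * X)⁻¹ := by
  have hsymm : (Xᵀ * X).IsSymm := by
    rw [IsSymm, transpose_mul, transpose_transpose]
  rw [transpose_mul_self_updateRow]
  exact ⟨isUnit_sub_vecMulVec_add_vecMulVec hsymm hX hd,
    inv_sub_vecMulVec_add_vecMulVec hsymm hX hd⟩

end Gram

/-- Paper's Theorem 1: rank-two update of the inverse Gram matrix after a one-point
exchange.  If `X̃` is obtained from `X` (with `n ≥ p` and invertible symmetric Gram
matrix `XᵀX`) by replacing the row `u = x_{i_m}` with `x_j`, and `d ≠ 0`, then `X̃ᵀX̃`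
is invertible, `(X̃ᵀX̃)⁻¹ = (XᵀX)⁻¹ − (XᵀX)⁻¹ (A/d) (XᵀX)⁻¹`, and the leverage of
`x_j` in the exchanged sample is `x_jᵀ (X̃ᵀX̃)⁻¹ x_j` with this expression. -/
theorem inv_gram_exchange {n p : ℕ} (hnp : p ≤ n) (X : Matrix (Fin n) (Fin p) ℝ)
    (im : Fin n) (xj : Fin p → ℝ)
    (hinv : IsUnit (Xᵀ * X)) (hsymm : (Xᵀ * X).IsSymm)
    (u : Fin p → ℝ) (hu : u = X im)
    (Xtilde : Matrix (Fin n) (Fin p) ℝ) (hXt : Xtilde = X.updateRow im xj)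
    (A : Matrix (Fin p) (Fin p) ℝ)
    (hA : A = (u ⬝ᵥ ((Xᵀ * X)⁻¹ *ᵥ xj)) • (vecMulVec xj u + vecMulVec u xj)
        + (1 - u ⬝ᵥ ((Xᵀ * X)⁻¹ *ᵥ u)) • vecMulVec xj xj
        - (1 + xj ⬝ᵥ ((Xᵀ * X)⁻¹ *ᵥ xj)) • vecMulVec u u)
    (d : ℝ)
    (hd : d = (1 - u ⬝ᵥ ((Xᵀ * X)⁻¹ *ᵥ u)) * (1 + xj ⬝ᵥ ((Xᵀ * X)⁻¹ *ᵥ xj))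
        + (u ⬝ᵥ ((Xᵀ * X)⁻¹ *ᵥ xj)) ^ 2)
    (hd0 : d ≠ 0) :
    IsUnit (Xtildeᵀ * Xtilde) ∧
      (Xtildeᵀ * Xtilde)⁻¹
        = (Xᵀ * X)⁻¹ - (Xᵀ * X)⁻¹ * (d⁻¹ • A) * (Xᵀ * X)⁻¹ ∧
      xj ⬝ᵥ ((Xtildeᵀ * Xtilde)⁻¹ *ᵥ xj)
        = xj ⬝ᵥ (((Xᵀ * X)⁻¹ - (Xᵀ * X)⁻¹ * (d⁻¹ • A) * (Xᵀ * X)⁻¹) *ᵥ xj) := by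
  subst hu hXt hA hd
  obtain ⟨hunit, hinverse⟩ := inv_gram_exchange_general X im xj hinv hd0.isUnit
  rw [Ring.inverse_eq_inv] at hinverse
  exact ⟨hunit, hinverse, congrArg (fun M => xj ⬝ᵥ (M *ᵥ xj)) hinverse⟩
end

section
/- Let M be an invertible symmetric real p×p matrix and let u, v ∈ ℝᵖ. Then det(M − uuᵀ + vvᵀ) = d · det(M), where d = (1 − uᵀM⁻¹u)(1 + vᵀM⁻¹v) + (uᵀM⁻¹v)². In particular, M − uuᵀ + vvᵀ is invertible if and only if d ≠ 0. -/
open Matrix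

/-!
An exchange adds to `M` the product of a `p × 2` and a `2 × p` matrix, so the Weinstein–Aronszajn
identity reduces its determinant to `det M` times a `2 × 2` determinant. Since `M⁻¹` is symmetric
and `uuᵀ` enters with a minus sign, the off-diagonal entries of the latter are `± uᵀM⁻¹v`, whence
the term `+ (uᵀM⁻¹v)²`.
-/

section MatrixDeterminantLemma

variable {ι m n R : Type*}

theorem sum_vecMulVec_eq_transpose_mul [Fintype ι] [NonUnitalNonAssocSemiring R]
    (a : ι → m → R) (b : ι → n → R) :
    ∑ k, vecMulVec (a k) (b k) = (of a)ᵀ * of b := by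
  ext i j
  simp only [Matrix.sum_apply, vecMulVec_apply, mul_apply, transpose_apply, of_apply]

theorem of_mul_mul_transpose_of {κ : Type*} [Fintype m] [Fintype n] [NonUnitalSemiring R]
    (b : ι → m → R) (A : Matrix m n R) (a : κ → n → R) :
    of b * A * (of a)ᵀ = of fun i j => b i ⬝ᵥ (A *ᵥ a j) := by
  rw [Matrix.mul_assoc]
  rfl

variable [Fintype n] [DecidableEq n] [CommRing R] {M : Matrix n n R}

theorem det_add_sum_vecMulVec [Fintype ι] [DecidableEq ι] (hM : IsUnit M) (a b : ι → n → R) :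
    (M + ∑ k, vecMulVec (a k) (b k)).det =
      M.det * (1 + of fun i j => b i ⬝ᵥ (M⁻¹ *ᵥ a j)).det := by
  rw [sum_vecMulVec_eq_transpose_mul, det_add_mul _ _ ((isUnit_iff_isUnit_det M).1 hM),
    of_mul_mul_transpose_of]

theorem det_add_vecMulVec_add_vecMulVec (hM : IsUnit M) (a₁ b₁ a₂ b₂ : n → R) :
    (M + vecMulVec a₁ b₁ + vecMulVec a₂ b₂).det =
      M.det * ((1 + b₁ ⬝ᵥ (M⁻¹ *ᵥ a₁)) * (1 + b₂ ⬝ᵥ (M⁻¹ *ᵥ a₂)) -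
        (b₁ ⬝ᵥ (M⁻¹ *ᵥ a₂)) * (b₂ ⬝ᵥ (M⁻¹ *ᵥ a₁))) := by
  simpa [Fin.sum_univ_two, det_fin_two, add_assoc]
    using det_add_sum_vecMulVec hM ![a₁, a₂] ![b₁, b₂]

end MatrixDeterminantLemma

theorem det_rank_two_exchange_general {n R : Type*} [Fintype n] [DecidableEq n] [CommRing R]
    (M : Matrix n n R) (hM : IsUnit M) (hsymm : M.IsSymm) (u v : n → R) (d : R)
    (hd : d = (1 - u ⬝ᵥ (M⁻¹ *ᵥ u)) * (1 + v ⬝ᵥ (M⁻¹ *ᵥ v))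
        + (u ⬝ᵥ (M⁻¹ *ᵥ v)) ^ 2) :
    (M - vecMulVec u u + vecMulVec v v).det = d * M.det ∧
      (IsUnit (M - vecMulVec u u + vecMulVec v v) ↔ IsUnit d) := by
  have hswap : v ⬝ᵥ (M⁻¹ *ᵥ u) = u ⬝ᵥ (M⁻¹ *ᵥ v) := by
    rw [← dotProduct_transpose_mulVec, hsymm.inv.eq]
  have hdet : (M - vecMulVec u u + vecMulVec v v).det = d * M.det := by
    rw [sub_eq_add_neg, ← neg_vecMulVec, det_add_vecMulVec_add_vecMulVec hM, mulVec_neg,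
      dotProduct_neg, dotProduct_neg, hswap, hd]
    ring
  refine ⟨hdet, ?_⟩
  rw [isUnit_iff_isUnit_det, hdet, IsUnit.mul_iff]
  exact and_iff_left ((isUnit_iff_isUnit_det M).1 hM)

/-- Rank-two determinant update: for an invertible symmetric real `p×p` matrix `M` and
vectors `u, v`, `det(M − uuᵀ + vvᵀ) = d · det M` with
`d = (1 − uᵀM⁻¹u)(1 + vᵀM⁻¹v) + (uᵀM⁻¹v)²`; in particular `M − uuᵀ + vvᵀ` is
invertible iff `d ≠ 0`. -/
theorem det_rank_two_exchange {p : ℕ} (M : Matrix (Fin p) (Fin p) ℝ)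
    (hM : IsUnit M) (hsymm : M.IsSymm) (u v : Fin p → ℝ)
    (d : ℝ)
    (hd : d = (1 - u ⬝ᵥ (M⁻¹ *ᵥ u)) * (1 + v ⬝ᵥ (M⁻¹ *ᵥ v))
        + (u ⬝ᵥ (M⁻¹ *ᵥ v)) ^ 2) :
    (M - vecMulVec u u + vecMulVec v v).det = d * M.det ∧
      (IsUnit (M - vecMulVec u u + vecMulVec v v) ↔ d ≠ 0) := by
  rw [← isUnit_iff_ne_zero]
  exact det_rank_two_exchange_general M hM hsymm u v d hd
end

section
/- Let X be a real n×p matrix with XᵀX invertible, Y ∈ ℝⁿ, and let β̂ = (XᵀX)⁻¹XᵀY be the OLS estimator. Fix an index i, let x_i ∈ ℝᵖ be the i-th row of X, h_{ii} = x_iᵀ(XᵀX)⁻¹x_i its leverage, and e_i = Y_i − x_iᵀβ̂ its residual. Let X_{(i)} and Y_{(i)} be obtained by deleting row i from X and entry i from Y, and assume h_{ii} ≠ 1 (so X_{(i)}ᵀX_{(i)} is invertible), with β̂_{(i)} = (X_{(i)}ᵀX_{(i)})⁻¹X_{(i)}ᵀY_{(i)}. Then β̂ − β̂_{(i)} = (XᵀX)⁻¹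 x_i · e_i/(1 − h_{ii}). -/
open Matrix

/-!
Deleting row `i` turns the normal equations `(XᵀX) β = XᵀY` into
`(XᵀX - xᵢxᵢᵀ) β₍ᵢ₎ = XᵀY - Yᵢ xᵢ`. The new Gram matrix maps `β̂ - β̂₍ᵢ₎` to `eᵢ xᵢ` and
`(XᵀX)⁻¹xᵢ` to `(1 - hᵢᵢ) xᵢ`, and by the matrix determinant lemma it is invertible when
`1 - hᵢᵢ` is, so `(1 - hᵢᵢ) (β̂ - β̂₍ᵢ₎)` and `eᵢ (XᵀX)⁻¹xᵢ`, having the same image, agree.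
-/

section RemoveIndex

variable {l m R : Type*} [NonUnitalNonAssocSemiring R] {n : ℕ}

theorem mul_eq_submatrix_succAbove_mul_add_vecMulVec (A : Matrix l (Fin (n + 1)) R)
    (B : Matrix (Fin (n + 1)) m R) (i : Fin (n + 1)) :
    A * B = A.submatrix id i.succAbove * B.submatrix i.succAbove id +
      vecMulVec (A.col i) (B.row i) := by
  ext j k
  rw [mul_apply, Fin.sum_univ_succAbove _ i, add_comm]
  rfl

theorem mulVec_eq_submatrix_succAbove_mulVec_add_smul (A : Matrix l (Fin (n + 1)) R)
    (y : Fin (n + 1) → R) (i : Fin (n + 1)) :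
    A *ᵥ y = A.submatrix id i.succAbove *ᵥ (y ∘ i.succAbove) +
      MulOpposite.op (y i) • A.col i := by
  ext j
  rw [mulVec_eq_sum, Fin.sum_univ_succAbove _ i, add_comm, mulVec_eq_sum]
  rfl

end RemoveIndex

section RankOneUpdate

variable {k R : Type*} [Fintype k] [DecidableEq k] [CommRing R] {A : Matrix k k R}

theorem mulVec_inv_mulVec (hA : IsUnit A) (b : k → R) : A *ᵥ (A⁻¹ *ᵥ b) = b := by
  rw [mulVec_mulVec, mul_nonsing_inv A ((isUnit_iff_isUnit_det A).1 hA), one_mulVec]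

theorem det_sub_vecMulVec (hA : IsUnit A) (u v : k → R) :
    (A - vecMulVec u v).det = A.det * (1 - v ⬝ᵥ (A⁻¹ *ᵥ u)) := by
  have hAdet : IsUnit A.det := (isUnit_iff_isUnit_det A).1 hA
  rw [sub_eq_add_neg, ← neg_vecMulVec, vecMulVec_eq Unit,
    det_add_replicateCol_mul_replicateRow hAdet, Matrix.mul_assoc, ← replicateCol_mulVec,
    det_unique (1 + _), Matrix.add_apply, one_apply_eq, replicateRow_mul_replicateCol_apply,
    mulVec_neg, dotProduct_neg, ← sub_eq_add_neg]

theorem isUnit_sub_vecMulVec_iff (hA : IsUnit A) (u v : k → R) :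
    IsUnit (A - vecMulVec u v) ↔ IsUnit (1 - v ⬝ᵥ (A⁻¹ *ᵥ u)) := by
  rw [isUnit_iff_isUnit_det, det_sub_vecMulVec hA, IsUnit.mul_iff,
    and_iff_right ((isUnit_iff_isUnit_det A).1 hA)]

theorem one_sub_dotProduct_smul_sub_of_sub_vecMulVec_mulVec {u v w β β' : k → R} {y : R}
    (hB : IsUnit (A - vecMulVec u v)) (hw : A *ᵥ w = u)
    (hβ' : (A - vecMulVec u v) *ᵥ β' = A *ᵥ β - y • u) :
    (1 - v ⬝ᵥ w) • (β - β') = (y - v ⬝ᵥ β) • w := by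
  have update_mulVec (z : k → R) : (A - vecMulVec u v) *ᵥ z = A *ᵥ z - (v ⬝ᵥ z) • u := by
    rw [sub_mulVec, vecMulVec_mulVec, op_smul_eq_smul]
  have image_w : (A - vecMulVec u v) *ᵥ w = (1 - v ⬝ᵥ w) • u := by
    rw [update_mulVec, hw, sub_smul, one_smul]
  have image_sub : (A - vecMulVec u v) *ᵥ (β - β') = (y - v ⬝ᵥ β) • u := by
    rw [mulVec_sub, hβ', update_mulVec, sub_sub_sub_cancel_left, sub_smul]
  apply mulVec_injective_of_isUnit hB
  rw [mulVec_smul, mulVec_smul, image_sub, image_w, smul_comm]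

end RankOneUpdate

section OLS

variable {m k R : Type*} [Fintype m] [Fintype k] [DecidableEq k] [CommRing R]

/-- The ordinary least squares estimator `β̂ = (XᵀX)⁻¹XᵀY`, meaningful when `XᵀX` is invertible
(`Matrix.inv` is `0` otherwise). -/
noncomputable def olsCoeff (X : Matrix m k R) (Y : m → R) : k → R :=
  (Xᵀ * X)⁻¹ *ᵥ (Xᵀ *ᵥ Y)

/-- The leverage `hᵢᵢ = xᵢᵀ(XᵀX)⁻¹xᵢ` of row `i`, i.e. the `i`-th diagonal entry of the hat
matrix. -/
noncomputable def leverage (X : Matrix m k R) (i : m) : R :=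
  X i ⬝ᵥ ((Xᵀ * X)⁻¹ *ᵥ X i)

/-- The residual `eᵢ = Yᵢ - xᵢᵀβ̂` of observation `i` under the least squares fit. -/
noncomputable def olsResidual (X : Matrix m k R) (Y : m → R) (i : m) : R :=
  Y i - X i ⬝ᵥ olsCoeff X Y

theorem gram_mulVec_olsCoeff {X : Matrix m k R} (hX : IsUnit (Xᵀ * X)) (Y : m → R) :
    (Xᵀ * X) *ᵥ olsCoeff X Y = Xᵀ *ᵥ Y :=
  mulVec_inv_mulVec hX (Xᵀ *ᵥ Y)

end OLS

section LeaveOneOut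

variable {n : ℕ} {k R : Type*} [CommRing R]

theorem gram_submatrix_succAbove (X : Matrix (Fin (n + 1)) k R) (i : Fin (n + 1)) :
    (X.submatrix i.succAbove id)ᵀ * X.submatrix i.succAbove id =
      Xᵀ * X - vecMulVec (X i) (X i) :=
  eq_sub_of_add_eq (mul_eq_submatrix_succAbove_mul_add_vecMulVec Xᵀ X i).symm

theorem transpose_submatrix_succAbove_mulVec (X : Matrix (Fin (n + 1)) k R)
    (Y : Fin (n + 1) → R) (i : Fin (n + 1)) :
    (X.submatrix i.succAbove id)ᵀ *ᵥ (Y ∘ i.succAbove) = Xᵀ *ᵥ Y - Y i • X i := by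
  rw [mulVec_eq_submatrix_succAbove_mulVec_add_smul Xᵀ Y i, op_smul_eq_smul]
  exact (add_sub_cancel_right _ _).symm

variable [Fintype k] [DecidableEq k]

theorem isUnit_gram_submatrix_succAbove_iff {X : Matrix (Fin (n + 1)) k R}
    (hX : IsUnit (Xᵀ * X)) (i : Fin (n + 1)) :
    IsUnit ((X.submatrix i.succAbove id)ᵀ * X.submatrix i.succAbove id) ↔
      IsUnit (1 - leverage X i) := by
  rw [gram_submatrix_succAbove, isUnit_sub_vecMulVec_iff hX, leverage]

theorem ols_leave_one_out_coeff_general {X : Matrix (Fin (n + 1)) k R} (hX : IsUnit (Xᵀ * X))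
    (Y : Fin (n + 1) → R) {i : Fin (n + 1)} (hi : IsUnit (1 - leverage X i)) :
    (1 - leverage X i) • (olsCoeff X Y - olsCoeff (X.submatrix i.succAbove id) (Y ∘ i.succAbove)) =
      olsResidual X Y i • ((Xᵀ * X)⁻¹ *ᵥ X i) := by
  have hXi := (isUnit_gram_submatrix_succAbove_iff hX i).2 hi
  have normal_eq := gram_mulVec_olsCoeff hXi (Y ∘ i.succAbove)
  rw [transpose_submatrix_succAbove_mulVec, ← gram_mulVec_olsCoeff hX] at normal_eq
  rw [gram_submatrix_succAbove] at hXi normal_eq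
  exact one_sub_dotProduct_smul_sub_of_sub_vecMulVec_mulVec hXi
    (mulVec_inv_mulVec hX (X i)) normal_eq

end LeaveOneOut

/-- Leave-one-out OLS coefficient formula: with `β̂` the OLS estimator, `h = hᵢᵢ` the
leverage of row `i`, `e = eᵢ` its residual, and `β̂₍ᵢ₎` the OLS estimator after deleting
observation `i`, one has `β̂ − β̂₍ᵢ₎ = (XᵀX)⁻¹ xᵢ · eᵢ/(1 − hᵢᵢ)`. -/
theorem ols_leave_one_out_coeff {n p : ℕ} (X : Matrix (Fin (n + 1)) (Fin p) ℝ)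
    (Y : Fin (n + 1) → ℝ) (hX : IsUnit (Xᵀ * X)) (i : Fin (n + 1))
    (βhat : Fin p → ℝ) (hβ : βhat = (Xᵀ * X)⁻¹ *ᵥ (Xᵀ *ᵥ Y))
    (h : ℝ) (hh : h = X i ⬝ᵥ ((Xᵀ * X)⁻¹ *ᵥ X i)) (hh1 : h ≠ 1)
    (e : ℝ) (he : e = Y i - X i ⬝ᵥ βhat)
    (Xi : Matrix (Fin n) (Fin p) ℝ) (hXi : Xi = X.submatrix i.succAbove id)
    (Yi : Fin n → ℝ) (hYi : Yi = Y ∘ i.succAbove)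
    (βi : Fin p → ℝ) (hβi : βi = (Xiᵀ * Xi)⁻¹ *ᵥ (Xiᵀ *ᵥ Yi)) :
    βhat - βi = (e / (1 - h)) • ((Xᵀ * X)⁻¹ *ᵥ X i) := by
  subst hβ hh he hXi hYi hβi
  have one_sub_ne_zero := sub_ne_zero.2 hh1.symm
  rw [div_eq_inv_mul, mul_smul, eq_inv_smul_iff₀ one_sub_ne_zero]
  exact ols_leave_one_out_coeff_general hX Y one_sub_ne_zero.isUnit
end
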